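/- (Theorem 2 of the paper, second-order derivative of the eigenvalue cost.) Suppose the three eigenvalues λ₁ > λ₂ > λ₃ of A are pairwise distinct, with orthonormal eigenvectors u₁, u₂, u₃ forming the orthogonal matrix U = [u₁ u₂ u₃]. Define, for m, n ∈ {1,2,3} and each j ∈ {1,…,N}, the row vectors F^{p_j}_{m,n} = ((p_j − p̄)ᵀ/(N(λ_n − λ_m)))·(u_m u_nᵀ + u_n u_mᵀ) if m ≠ n, and F^{p_j}_{m,n} = 0 if m = n, and let F^{p_j}_k ∈ ℝ^{3×3} be the matrix whose m-th row is F^{p_j}_{m,k}. Then the second partial derivative of λ_k with respect to the points satisfies: ∂²λ_k/(∂p_j ∂p_i) = (2/N)·( ((N−1)/N)·u_k u_kᵀ + u_k (p_i − p̄)ᵀ U F^{p_j}_k + U F^{p_j}_k · (u_kᵀ(p_i − p̄)) ) when i = j, and ∂²λ_k/(∂p_j ∂p_i) = (2/N)·( −(1/N)·u_k u_kᵀ + u_k (p_i − p̄)ᵀ U F^{p_j}_k + U F^{p_j}_k · (u_kᵀ(p_i − p̄)) ) when i ≠ j. -/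

import Mathlib

open Matrix Finset

/-- The covariance matrix `A(p₁, …, p_N) = (1/N) ∑ᵢ (pᵢ - p̄)(pᵢ - p̄)ᵀ` of a
configuration of `N` points in `ℝ³`, where `p̄ = (1/N) ∑ᵢ pᵢ`. -/
noncomputable def covMatrix (N : ℕ) (p : Fin N → Fin 3 → ℝ) :
    Matrix (Fin 3) (Fin 3) ℝ :=
  (N : ℝ)⁻¹ • ∑ i, Matrix.vecMulVec (p i - (N : ℝ)⁻¹ • ∑ j, p j)
    (p i - (N : ℝ)⁻¹ • ∑ j, p j)

/-!
On a Euclidean space, the normalised eigenpair equation `T q w = Λ w`, `⟪v, w⟫ = 1` has an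
invertible derivative in `(w, Λ)` at a simple eigenvalue of a symmetric `T p`, so the implicit
function theorem continues the eigenpair smoothly in `q`. Pairing the differentiated equation with
`w` gives the Hellmann–Feynman formula `⟪w, w⟫ DΛ = ⟪w, (DT) w⟫`. Since `⟪w p, w q⟫` is constant,
`Dw` is orthogonal to `w` at `p`, and differentiating once more gives
`D²Λ = ⟪w, (D²T) w⟫ + 2 ⟪Dw, (DT) w⟫`, where expanding `Dw` in an eigenbasis produces the
denominators `λ_k - λ_m`. The covariance is a quadratic function of the points, so its derivatives
are polarisations, and because the deviations from the mean sum to zero only one factor of each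
product has to be centred.
-/

open scoped Topology InnerProductSpace

section BorderedOperator

variable {𝕜 E V : Type*} [RCLike 𝕜] [NormedAddCommGroup E] [NormedSpace 𝕜 E]
  [NormedAddCommGroup V] [NormedSpace 𝕜 V]

/-- The bordered operator `(w, ν) ↦ (S w - μ w - ν v, φ w)`: the derivative at `(v, μ)` of
`(w, ν) ↦ (S w - ν w, φ w)`, whose zeros, up to the normalisation of `φ w`, are the eigenpairs of
`S`. -/
noncomputable def borderedOperator (S : V →L[𝕜] V) (φ : V →L[𝕜] 𝕜) (v : V) (μ : 𝕜) :
    V × 𝕜 →L[𝕜] V × 𝕜 :=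
  ((S - μ • ContinuousLinearMap.id 𝕜 V) ∘L .fst 𝕜 V 𝕜 -
    (ContinuousLinearMap.snd 𝕜 V 𝕜).smulRight v).prod (φ ∘L .fst 𝕜 V 𝕜)

theorem borderedOperator_apply (S : V →L[𝕜] V) (φ : V →L[𝕜] 𝕜) (v : V) (μ : 𝕜) (z : V × 𝕜) :
    borderedOperator S φ v μ z = (S z.1 - μ • z.1 - z.2 • v, φ z.1) := rfl

theorem hasFDerivAt_eigenpairEquation (S : V →L[𝕜] V) (φ : V →L[𝕜] 𝕜) (v : V) (μ : 𝕜) :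
    HasFDerivAt (fun z : V × 𝕜 => (S z.1 - z.2 • z.1, φ z.1))
      (borderedOperator S φ v μ) (v, μ) := by
  have hfst : HasFDerivAt Prod.fst (.fst 𝕜 V 𝕜) (v, μ) := hasFDerivAt_fst
  have hsnd : HasFDerivAt Prod.snd (.snd 𝕜 V 𝕜) (v, μ) := hasFDerivAt_snd
  refine (((S.hasFDerivAt.comp _ hfst).sub (hsnd.smul hfst)).prodMk
    (φ.hasFDerivAt.comp _ hfst)).congr_fderiv ?_
  ext z <;> simp [borderedOperator_apply]

theorem exists_contDiffAt_eigenpair [CompleteSpace E] [CompleteSpace V] {n : WithTop ℕ∞}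
    (hn : n ≠ 0) {T : E → V →L[𝕜] V} {p : E} (hT : ContDiffAt 𝕜 n T p) {φ : V →L[𝕜] 𝕜} {v : V}
    {μ : 𝕜} (hv : T p v = μ • v) (hinv : (borderedOperator (T p) φ v μ).IsInvertible) :
    ∃ (Λ : E → 𝕜) (w : E → V), Λ p = μ ∧ w p = v ∧ ContDiffAt 𝕜 n Λ p ∧ ContDiffAt 𝕜 n w p ∧
      ∀ᶠ q in 𝓝 p, T q (w q) = Λ q • w q ∧ φ (w q) = φ v := by
  let f : E × (V × 𝕜) → V × 𝕜 := fun z => (T z.1 z.2.1 - z.2.2 • z.2.1, φ z.2.1)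
  have hf : ContDiffAt 𝕜 n f (p, (v, μ)) := by
    have : ContDiffAt 𝕜 n (fun z : E × (V × 𝕜) => T z.1) (p, (v, μ)) :=
      hT.comp (p, (v, μ)) contDiffAt_fst
    fun_prop
  have hpartial : fderiv 𝕜 f (p, (v, μ)) ∘L .inr 𝕜 E (V × 𝕜) = borderedOperator (T p) φ v μ :=
    ((hf.differentiableAt hn).hasFDerivAt.comp (v, μ) (hasFDerivAt_prodMk_right p (v, μ))).unique
      (hasFDerivAt_eigenpairEquation (T p) φ v μ)
  rw [← hpartial] at hinv
  let ψ := hf.implicitFunction hn hinv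
  have hψ : ContDiffAt 𝕜 n ψ p := hf.contDiffAt_implicitFunction hn hinv
  have hψp : ψ p = (v, μ) := hf.implicitFunction_apply_self hn hinv
  refine ⟨fun q => (ψ q).2, fun q => (ψ q).1, congrArg Prod.snd hψp, congrArg Prod.fst hψp,
    hψ.snd, hψ.fst, ?_⟩
  filter_upwards [hf.eventually_apply_implicitFunction hn hinv] with q hq
  obtain ⟨heq, hφ⟩ := Prod.ext_iff.mp hq
  simp only [f, hv, sub_self] at heq hφ
  exact ⟨sub_eq_zero.mp heq, hφ⟩

theorem fderiv_eigenpair_equation {T : E → V →L[𝕜] V} {Λ : E → 𝕜} {w : E → V} {q : E}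
    (hT : DifferentiableAt 𝕜 T q) (hΛ : DifferentiableAt 𝕜 Λ q) (hw : DifferentiableAt 𝕜 w q)
    (heig : ∀ᶠ q' in 𝓝 q, T q' (w q') = Λ q' • w q') (δ : E) :
    fderiv 𝕜 T q δ (w q) + T q (fderiv 𝕜 w q δ) =
      fderiv 𝕜 Λ q δ • w q + Λ q • fderiv 𝕜 w q δ := by
  have h := congrArg (· δ) (Filter.EventuallyEq.fderiv_eq (𝕜 := 𝕜) heig)
  simpa [fderiv_clm_apply hT hw, fderiv_fun_smul hΛ hw, add_comm] using h

end BorderedOperator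

section Symmetric

variable {E V : Type*} [NormedAddCommGroup E] [NormedSpace ℝ E]
  [NormedAddCommGroup V] [InnerProductSpace ℝ V]

theorem inner_apply_eq_mul_inner_of_eigenvector {S : V →L[ℝ] V}
    (hS : (S : V →ₗ[ℝ] V).IsSymmetric) {v : V} {μ : ℝ} (hv : S v = μ • v) (x : V) :
    ⟪v, S x⟫_ℝ = μ * ⟪v, x⟫_ℝ := by
  rw [← real_inner_smul_left, ← hv]
  exact (hS v x).symm

theorem isInvertible_borderedOperator_of_isSymmetric [FiniteDimensional ℝ V] {S : V →L[ℝ] V}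
    (hS : (S : V →ₗ[ℝ] V).IsSymmetric) {v : V} {μ : ℝ} (hv : S v = μ • v) (hnorm : ⟪v, v⟫_ℝ = 1)
    (hsimple : ∀ x, S x = μ • x → ⟪v, x⟫_ℝ = 0 → x = 0) :
    (borderedOperator S (innerSL ℝ v) v μ).IsInvertible := by
  have hinj : Function.Injective (borderedOperator S (innerSL ℝ v) v μ) := by
    refine (injective_iff_map_eq_zero _).mpr fun ⟨x, ν⟩ h => ?_
    obtain ⟨heq, horth⟩ : S x - μ • x - ν • v = 0 ∧ ⟪v, x⟫_ℝ = 0 := Prod.ext_iff.mp h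
    have hν : ν = 0 := by
      have hpair := congrArg (⟪v, ·⟫_ℝ) heq
      simpa only [inner_sub_right, real_inner_smul_right,
        inner_apply_eq_mul_inner_of_eigenvector hS hv, horth, hnorm, inner_zero_right, mul_zero,
        sub_zero, zero_sub, mul_one, neg_eq_zero] using hpair
    have hx : x = 0 := hsimple x (by simpa [hν, sub_eq_zero] using heq) horth
    rw [hx, hν, Prod.mk_zero_zero]
  exact ⟨(LinearEquiv.ofInjectiveEndo _ hinj).toContinuousLinearEquiv, by ext <;> rfl⟩

theorem eq_zero_of_simple_eigenvalue {ι : Type*} [Fintype ι] {S : V →L[ℝ] V}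
    (hS : (S : V →ₗ[ℝ] V).IsSymmetric) (b : OrthonormalBasis ι ℝ V) {lam : ι → ℝ}
    (hb : ∀ m, S (b m) = lam m • b m) {k : ι} (hsimple : ∀ m, m ≠ k → lam m ≠ lam k) {x : V}
    (hx : S x = lam k • x) (horth : ⟪b k, x⟫_ℝ = 0) : x = 0 := by
  refine InnerProductSpace.ext_inner_left_basis b.toBasis fun m => ?_
  rw [b.coe_toBasis, inner_zero_right]
  obtain rfl | hm := eq_or_ne m k
  · exact horth
  · have hpair := inner_apply_eq_mul_inner_of_eigenvector hS (hb m) x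
    rw [hx, real_inner_smul_right] at hpair
    exact (mul_eq_mul_right_iff.mp hpair).resolve_left (hsimple m hm).symm

theorem inner_self_mul_fderiv_eigenvalue {T : E → V →L[ℝ] V} {Λ : E → ℝ} {w : E → V} {q : E}
    (hT : DifferentiableAt ℝ T q) (hΛ : DifferentiableAt ℝ Λ q) (hw : DifferentiableAt ℝ w q)
    (hsymm : (T q : V →ₗ[ℝ] V).IsSymmetric) (heig : ∀ᶠ q' in 𝓝 q, T q' (w q') = Λ q' • w q')
    (ε : E) : ⟪w q, w q⟫_ℝ * fderiv ℝ Λ q ε = ⟪w q, fderiv ℝ T q ε (w q)⟫_ℝ := by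
  have hpair := congrArg (⟪w q, ·⟫_ℝ) (fderiv_eigenpair_equation hT hΛ hw heig ε)
  simp only [inner_add_right, real_inner_smul_right,
    inner_apply_eq_mul_inner_of_eigenvector hsymm heig.self_of_nhds] at hpair
  linarith

theorem isSymmetric_fderiv {T : E → V →L[ℝ] V} {p : E} (hT : DifferentiableAt ℝ T p)
    (hsymm : ∀ᶠ q in 𝓝 p, (T q : V →ₗ[ℝ] V).IsSymmetric) (δ : E) :
    (fderiv ℝ T p δ : V →ₗ[ℝ] V).IsSymmetric := by
  intro x y
  have h := congrArg (· δ) (Filter.EventuallyEq.fderiv_eq (𝕜 := ℝ)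
    (hsymm.mono fun q hq => hq x y))
  have hx : DifferentiableAt ℝ (fun q => T q x) p := by fun_prop
  have hy : DifferentiableAt ℝ (fun q => T q y) p := by fun_prop
  simpa [fderiv_inner_apply, hx, hy, fderiv_clm_apply hT] using h

/-- `Λ` and `w` continue the eigenpair `(Λ p, w p)` of `T p` to a `C²` family of eigenpairs of `T q`
for `q` near `p`. The eigenvectors are normalised by the linear condition `⟪w p, w q⟫ = 1` rather
than by `‖w q‖ = 1`. -/
structure IsEigenbranchAt (T : E → V →L[ℝ] V) (Λ : E → ℝ) (w : E → V) (p : E) : Prop where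
  contDiffAt_eigenvalue : ContDiffAt ℝ 2 Λ p
  contDiffAt_eigenvector : ContDiffAt ℝ 2 w p
  eventually_apply_eq : ∀ᶠ q in 𝓝 p, T q (w q) = Λ q • w q
  eventually_inner_eq_one : ∀ᶠ q in 𝓝 p, ⟪w p, w q⟫_ℝ = 1

namespace IsEigenbranchAt

variable {T : E → V →L[ℝ] V} {Λ : E → ℝ} {w : E → V} {p : E}

theorem exists_of_simple [CompleteSpace E] [FiniteDimensional ℝ V]
    (hT : ContDiffAt ℝ 2 T p) (hsymm : (T p : V →ₗ[ℝ] V).IsSymmetric) {v : V} {μ : ℝ}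
    (hv : T p v = μ • v) (hnorm : ⟪v, v⟫_ℝ = 1)
    (hsimple : ∀ x, T p x = μ • x → ⟪v, x⟫_ℝ = 0 → x = 0) :
    ∃ (Λ : E → ℝ) (w : E → V), Λ p = μ ∧ w p = v ∧ IsEigenbranchAt T Λ w p := by
  have : CompleteSpace V := FiniteDimensional.complete ℝ V
  obtain ⟨Λ, w, hΛp, hwp, hΛ, hw, heig⟩ := exists_contDiffAt_eigenpair two_ne_zero hT hv
    (isInvertible_borderedOperator_of_isSymmetric hsymm hv hnorm hsimple)
  refine ⟨Λ, w, hΛp, hwp, hΛ, hw, heig.mono fun q hq => hq.1, heig.mono fun q hq => ?_⟩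
  rw [hwp, ← hnorm]
  exact hq.2

theorem inner_self_eq_one (h : IsEigenbranchAt T Λ w p) : ⟪w p, w p⟫_ℝ = 1 :=
  h.eventually_inner_eq_one.self_of_nhds

theorem differentiableAt_eigenvector (h : IsEigenbranchAt T Λ w p) : DifferentiableAt ℝ w p :=
  h.contDiffAt_eigenvector.differentiableAt two_ne_zero

theorem inner_fderiv_eigenvector_eq_zero (h : IsEigenbranchAt T Λ w p) (δ : E) :
    ⟪w p, fderiv ℝ w p δ⟫_ℝ = 0 := by
  have hconst := congrArg (· δ) (Filter.EventuallyEq.fderiv_eq (𝕜 := ℝ) h.eventually_inner_eq_one)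
  simpa [fderiv_inner_apply, h.differentiableAt_eigenvector] using hconst

theorem eventually_inner_self_mul_fderiv_eigenvalue (h : IsEigenbranchAt T Λ w p)
    (hT : ContDiffAt ℝ 2 T p) (hsymm : ∀ᶠ q in 𝓝 p, (T q : V →ₗ[ℝ] V).IsSymmetric) (ε : E) :
    ∀ᶠ q in 𝓝 p, ⟪w q, w q⟫_ℝ * fderiv ℝ Λ q ε = ⟪w q, fderiv ℝ T q ε (w q)⟫_ℝ := by
  filter_upwards [hT.eventually (by simp), h.contDiffAt_eigenvalue.eventually (by simp),
    h.contDiffAt_eigenvector.eventually (by simp), hsymm,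
    h.eventually_apply_eq.eventually_nhds] with q hTq hΛq hwq hsymmq heigq
  exact inner_self_mul_fderiv_eigenvalue (hTq.differentiableAt two_ne_zero)
    (hΛq.differentiableAt two_ne_zero) (hwq.differentiableAt two_ne_zero) hsymmq heigq ε

theorem fderiv_fderiv_eigenvalue (h : IsEigenbranchAt T Λ w p) (hT : ContDiffAt ℝ 2 T p)
    (hsymm : ∀ᶠ q in 𝓝 p, (T q : V →ₗ[ℝ] V).IsSymmetric) (δ ε : E) :
    fderiv ℝ (fderiv ℝ Λ) p δ ε = ⟪w p, fderiv ℝ (fderiv ℝ T) p δ ε (w p)⟫_ℝ +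
      2 * ⟪fderiv ℝ w p δ, fderiv ℝ T p ε (w p)⟫_ℝ := by
  have hw := h.differentiableAt_eigenvector
  have hDΛ : DifferentiableAt ℝ (fderiv ℝ Λ) p :=
    (h.contDiffAt_eigenvalue.fderiv_right (m := 1) le_rfl).differentiableAt one_ne_zero
  have hDT : DifferentiableAt ℝ (fderiv ℝ T) p :=
    (hT.fderiv_right (m := 1) le_rfl).differentiableAt one_ne_zero
  have hww : DifferentiableAt ℝ (fun q => ⟪w q, w q⟫_ℝ) p := hw.inner ℝ hw
  have hDΛε : DifferentiableAt ℝ (fun q => fderiv ℝ Λ q ε) p := by fun_prop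
  have hDTε : DifferentiableAt ℝ (fun q => fderiv ℝ T q ε) p := by fun_prop
  have hDTεw : DifferentiableAt ℝ (fun q => fderiv ℝ T q ε (w q)) p := by fun_prop
  have hdiff := congrArg (· δ) (Filter.EventuallyEq.fderiv_eq (𝕜 := ℝ)
    (h.eventually_inner_self_mul_fderiv_eigenvalue hT hsymm ε))
  have hadj : ⟪w p, fderiv ℝ T p ε (fderiv ℝ w p δ)⟫_ℝ =
      ⟪fderiv ℝ w p δ, fderiv ℝ T p ε (w p)⟫_ℝ := by
    rw [real_inner_comm]
    exact isSymmetric_fderiv (hT.differentiableAt two_ne_zero) hsymm ε _ _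
  have hstationary : fderiv ℝ (fun q => ⟪w q, w q⟫_ℝ) p δ = 0 := by
    rw [fderiv_inner_apply ℝ hw hw, real_inner_comm (w p), h.inner_fderiv_eigenvector_eq_zero,
      add_zero]
  simp only [fderiv_fun_mul hww hDΛε, fderiv_inner_apply ℝ hw hDTεw, fderiv_clm_apply hDTε hw,
    fderiv_clm_apply hDT (differentiableAt_const ε),
    fderiv_clm_apply hDΛ (differentiableAt_const ε), fderiv_fun_const, Pi.zero_apply,
    ContinuousLinearMap.comp_zero, zero_add, _root_.add_apply, _root_.smul_apply,
    ContinuousLinearMap.comp_apply, ContinuousLinearMap.flip_apply, hstationary,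
    h.inner_self_eq_one, inner_add_right, hadj, smul_eq_mul, one_mul, mul_zero,
    add_zero] at hdiff
  linarith

theorem inner_fderiv_eigenvector (h : IsEigenbranchAt T Λ w p) (hT : DifferentiableAt ℝ T p)
    (hsymm : (T p : V →ₗ[ℝ] V).IsSymmetric) {x : V} {κ : ℝ} (hx : T p x = κ • x)
    (hne : κ ≠ Λ p) (horth : ⟪x, w p⟫_ℝ = 0) (δ : E) :
    ⟪x, fderiv ℝ w p δ⟫_ℝ = (Λ p - κ)⁻¹ * ⟪x, fderiv ℝ T p δ (w p)⟫_ℝ := by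
  have hpair := congrArg (⟪x, ·⟫_ℝ) (fderiv_eigenpair_equation hT
    (h.contDiffAt_eigenvalue.differentiableAt two_ne_zero) h.differentiableAt_eigenvector
    h.eventually_apply_eq δ)
  simp only [inner_add_right, real_inner_smul_right,
    inner_apply_eq_mul_inner_of_eigenvector hsymm hx, horth] at hpair
  rw [eq_inv_mul_iff_mul_eq₀ (sub_ne_zero.mpr hne.symm)]
  linarith

theorem fderiv_fderiv_eigenvalue_eq_sum {ι : Type*} [Fintype ι] (h : IsEigenbranchAt T Λ w p)
    (hT : ContDiffAt ℝ 2 T p) (hsymm : ∀ᶠ q in 𝓝 p, (T q : V →ₗ[ℝ] V).IsSymmetric)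
    (b : OrthonormalBasis ι ℝ V) {lam : ι → ℝ} (hb : ∀ m, T p (b m) = lam m • b m) {k : ι}
    (hk : w p = b k) (hΛ : Λ p = lam k) (hsimple : ∀ m, m ≠ k → lam m ≠ lam k) (δ ε : E) :
    fderiv ℝ (fderiv ℝ Λ) p δ ε = ⟪b k, fderiv ℝ (fderiv ℝ T) p δ ε (b k)⟫_ℝ +
      2 * ∑ m, (lam k - lam m)⁻¹ *
        (⟪b m, fderiv ℝ T p δ (b k)⟫_ℝ * ⟪b m, fderiv ℝ T p ε (b k)⟫_ℝ) := by
  -- For `m = k` both sides vanish: `⟪w p, Dw⟫ = 0`, and `0⁻¹ = 0`.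
  have hcoeff (m : ι) : ⟪b m, fderiv ℝ w p δ⟫_ℝ =
      (lam k - lam m)⁻¹ * ⟪b m, fderiv ℝ T p δ (b k)⟫_ℝ := by
    obtain rfl | hm := eq_or_ne m k
    · rw [← hk, h.inner_fderiv_eigenvector_eq_zero, sub_self, _root_.inv_zero, zero_mul]
    · rw [← hΛ, ← hk]
      refine h.inner_fderiv_eigenvector (hT.differentiableAt two_ne_zero) hsymm.self_of_nhds (hb m)
        (hΛ ▸ hsimple m hm) ?_ δ
      rw [hk, b.inner_eq_zero hm]
  rw [h.fderiv_fderiv_eigenvalue hT hsymm, hk, ← b.sum_inner_mul_inner (fderiv ℝ w p δ)]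
  simp only [real_inner_comm (b _) (fderiv ℝ w p δ), hcoeff, mul_assoc]

end IsEigenbranchAt

end Symmetric

theorem fderiv_bilinear_diagonal {𝕜 E F : Type*} [NontriviallyNormedField 𝕜]
    [NormedAddCommGroup E] [NormedSpace 𝕜 E] [NormedAddCommGroup F] [NormedSpace 𝕜 F]
    (B : E →L[𝕜] E →L[𝕜] F) : fderiv 𝕜 (fun x => B x x) = ⇑(B + B.flip) := by
  ext x y
  have h := B.hasFDerivAt_of_bilinear (hasFDerivAt_id x) (hasFDerivAt_id x)
  simpa [ContinuousLinearMap.precompR, ContinuousLinearMap.precompL] using congrArg (· y) h.fderiv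

theorem fderiv_fderiv_bilinear_diagonal_apply {𝕜 E F : Type*} [NontriviallyNormedField 𝕜]
    [NormedAddCommGroup E] [NormedSpace 𝕜 E] [NormedAddCommGroup F] [NormedSpace 𝕜 F]
    (B : E →L[𝕜] E →L[𝕜] F) (p x y : E) :
    fderiv 𝕜 (fderiv 𝕜 fun q => B q q) p x y = B x y + B y x := by
  rw [fderiv_bilinear_diagonal, ContinuousLinearMap.fderiv]
  rfl

section Covariance

variable {n : Type*} {N : ℕ}

/-- The deviation `pᵢ - p̄` of the `i`-th point of a configuration from the mean. -/
noncomputable def deviation (p : Fin N → n → ℝ) (i : Fin N) : n → ℝ :=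
  p i - (N : ℝ)⁻¹ • ∑ j, p j

theorem deviation_add (p q : Fin N → n → ℝ) (i : Fin N) :
    deviation (p + q) i = deviation p i + deviation q i := by
  simp only [deviation, Pi.add_apply, sum_add_distrib, smul_add]
  abel

theorem deviation_smul (c : ℝ) (p : Fin N → n → ℝ) (i : Fin N) :
    deviation (c • p) i = c • deviation p i := by
  simp only [deviation, Pi.smul_apply, ← smul_sum, smul_sub, smul_comm c]

theorem sum_deviation (hN : N ≠ 0) (p : Fin N → n → ℝ) : ∑ i, deviation p i = 0 := by
  simp only [deviation, sum_sub_distrib, sum_const, card_univ, Fintype.card_fin]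
  rw [← Nat.cast_smul_eq_nsmul ℝ, smul_inv_smul₀ (Nat.cast_ne_zero.mpr hN), sub_self]

/-- The cross-covariance matrix `(1/N) ∑ᵢ (xᵢ - x̄)(yᵢ - ȳ)ᵀ`, the polarisation of the covariance
matrix, which is its diagonal. -/
noncomputable def crossCovariance (x y : Fin N → n → ℝ) : Matrix n n ℝ :=
  (N : ℝ)⁻¹ • ∑ i, vecMulVec (deviation x i) (deviation y i)

theorem isBilinearMap_crossCovariance :
    IsBilinearMap ℝ (crossCovariance : (Fin N → n → ℝ) → (Fin N → n → ℝ) → Matrix n n ℝ) where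
  add_left x x' y := by
    simp only [crossCovariance, deviation_add, add_vecMulVec, sum_add_distrib, smul_add]
  smul_left c x y := by
    simp only [crossCovariance, deviation_smul, smul_vecMulVec, ← smul_sum, smul_comm c]
  add_right x y y' := by
    simp only [crossCovariance, deviation_add, vecMulVec_add, sum_add_distrib, smul_add]
  smul_right c x y := by
    simp only [crossCovariance, deviation_smul, vecMulVec_smul, ← smul_sum, smul_comm c]

theorem transpose_crossCovariance (x y : Fin N → n → ℝ) :
    (crossCovariance x y)ᵀ = crossCovariance y x := by
  simp only [crossCovariance, transpose_smul, transpose_sum, transpose_vecMulVec]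

variable [Fintype n]

theorem dotProduct_deviation (s : n → ℝ) (p : Fin N → n → ℝ) (i : Fin N) :
    s ⬝ᵥ deviation p i = s ⬝ᵥ p i - (N : ℝ)⁻¹ * ∑ j, s ⬝ᵥ p j := by
  rw [deviation, dotProduct_sub, dotProduct_smul, dotProduct_sum, smul_eq_mul]

theorem sum_deviation_mul_deviation (hN : N ≠ 0) (x y : Fin N → n → ℝ) (s t : n → ℝ) :
    ∑ i, (s ⬝ᵥ deviation x i) * (t ⬝ᵥ deviation y i) =
      ∑ i, (s ⬝ᵥ deviation x i) * (t ⬝ᵥ y i) := by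
  simp only [dotProduct_deviation t, mul_sub, sum_sub_distrib, ← sum_mul]
  rw [← dotProduct_sum, sum_deviation hN, dotProduct_zero, zero_mul, sub_zero]

theorem dotProduct_crossCovariance_mulVec (hN : N ≠ 0) (x y : Fin N → n → ℝ) (s t : n → ℝ) :
    s ⬝ᵥ (crossCovariance x y *ᵥ t) =
      (N : ℝ)⁻¹ * ∑ i, (s ⬝ᵥ deviation x i) * (t ⬝ᵥ y i) := by
  rw [← sum_deviation_mul_deviation hN]
  simp only [crossCovariance, smul_mulVec, sum_mulVec, vecMulVec_mulVec, op_smul_eq_smul,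
    dotProduct_smul, dotProduct_sum, smul_eq_mul]
  congr 1
  exact sum_congr rfl fun i _ => by rw [dotProduct_comm (deviation y i), mul_comm]

theorem dotProduct_crossCovariance_mulVec_comm (x y : Fin N → n → ℝ) (s t : n → ℝ) :
    s ⬝ᵥ (crossCovariance x y *ᵥ t) = t ⬝ᵥ (crossCovariance y x *ᵥ s) := by
  rw [dotProduct_mulVec, ← transpose_crossCovariance, vecMul_transpose, dotProduct_comm]

/-- The contribution of the point `pⱼ`, moving with velocity `x`, to `N` times the derivative of the
entry `aᵀ A b` of the covariance matrix `A`. -/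
noncomputable def covarianceVariation (p : Fin N → n → ℝ) (a b : n → ℝ) (j : Fin N) (x : n → ℝ) :
    ℝ :=
  (a ⬝ᵥ deviation p j) * (b ⬝ᵥ x) + (b ⬝ᵥ deviation p j) * (a ⬝ᵥ x)

theorem dotProduct_crossCovariance_add_mulVec (hN : N ≠ 0) (p x : Fin N → n → ℝ) (a b : n → ℝ) :
    a ⬝ᵥ ((crossCovariance p x + crossCovariance x p) *ᵥ b) =
      (N : ℝ)⁻¹ * ∑ j, covarianceVariation p a b j (x j) := by
  rw [add_mulVec, dotProduct_add, dotProduct_crossCovariance_mulVec_comm x,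
    dotProduct_crossCovariance_mulVec hN, dotProduct_crossCovariance_mulVec hN, ← mul_add,
    ← sum_add_distrib]
  rfl

variable [DecidableEq n]

/-- `crossCovariance` as a continuous bilinear map into the operators on `EuclideanSpace ℝ n`. -/
noncomputable def crossCovarianceCLM :
    (Fin N → n → ℝ) →L[ℝ] (Fin N → n → ℝ) →L[ℝ] EuclideanSpace ℝ n →L[ℝ] EuclideanSpace ℝ n :=
  IsBilinearMap.toContinuousBilinearMap (𝕜 := ℝ)
    (f := fun x y => toEuclideanCLM (n := n) (𝕜 := ℝ) (crossCovariance x y))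
    { add_left := fun x x' y => by rw [isBilinearMap_crossCovariance.add_left, map_add]
      smul_left := fun c x y => by rw [isBilinearMap_crossCovariance.smul_left, map_smul]
      add_right := fun x y y' => by rw [isBilinearMap_crossCovariance.add_right, map_add]
      smul_right := fun c x y => by rw [isBilinearMap_crossCovariance.smul_right, map_smul] }

/-- The covariance matrix as an operator on `EuclideanSpace ℝ n`. -/
noncomputable def covarianceOperator (p : Fin N → n → ℝ) :
    EuclideanSpace ℝ n →L[ℝ] EuclideanSpace ℝ n :=
  toEuclideanCLM (n := n) (𝕜 := ℝ) (crossCovariance p p)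

theorem covarianceOperator_toLp (p : Fin N → n → ℝ) (t : n → ℝ) :
    covarianceOperator p (WithLp.toLp 2 t) = WithLp.toLp 2 (crossCovariance p p *ᵥ t) := rfl

theorem isSymmetric_covarianceOperator (p : Fin N → n → ℝ) :
    (covarianceOperator p : EuclideanSpace ℝ n →ₗ[ℝ] EuclideanSpace ℝ n).IsSymmetric :=
  isSymmetric_toEuclideanLin_iff.mpr (transpose_crossCovariance p p)

theorem contDiff_covarianceOperator {m : WithTop ℕ∞} :
    ContDiff ℝ m (covarianceOperator (n := n) (N := N)) :=
  (crossCovarianceCLM (n := n) (N := N)).contDiff.clm_apply contDiff_id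

theorem fderiv_covarianceOperator_apply (p x : Fin N → n → ℝ) :
    fderiv ℝ covarianceOperator p x =
      toEuclideanCLM (n := n) (𝕜 := ℝ) (crossCovariance p x + crossCovariance x p) := by
  rw [map_add]
  exact congrArg (· x)
    (congrFun (fderiv_bilinear_diagonal (crossCovarianceCLM (n := n) (N := N))) p)

theorem fderiv_fderiv_covarianceOperator_apply (p x y : Fin N → n → ℝ) :
    fderiv ℝ (fderiv ℝ covarianceOperator) p x y =
      toEuclideanCLM (n := n) (𝕜 := ℝ) (crossCovariance x y + crossCovariance y x) := by
  rw [map_add]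
  exact fderiv_fderiv_bilinear_diagonal_apply (crossCovarianceCLM (n := n) (N := N)) p x y

theorem inner_toLp_toEuclideanCLM_toLp (A : Matrix n n ℝ) (s t : n → ℝ) :
    ⟪WithLp.toLp 2 s, toEuclideanCLM (n := n) (𝕜 := ℝ) A (WithLp.toLp 2 t)⟫_ℝ = s ⬝ᵥ (A *ᵥ t) :=
  dotProduct_comm _ _

end Covariance

section Hessian

variable {n : Type*} [Fintype n] {N : ℕ}

theorem dotProduct_of_mul_mulVec (u : n → n → ℝ) (F : Matrix n n ℝ) (y x : n → ℝ) :
    y ⬝ᵥ (((of fun r c => u c r) * F) *ᵥ x) = ∑ m, (u m ⬝ᵥ y) * (F *ᵥ x) m := by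
  rw [← mulVec_mulVec, dotProduct_mulVec]
  exact sum_congr rfl fun m _ => by rw [dotProduct_comm (u m)]; rfl

theorem sum_sum_centering_mul (hN : N ≠ 0) (a b : Fin N → ℝ) :
    ∑ i, ∑ j, (if i = j then ((N : ℝ) - 1) / (N : ℝ) else -(1 / (N : ℝ))) * (a i * b j) =
      ∑ i, (a i - (N : ℝ)⁻¹ * ∑ j, a j) * b i := by
  have hcentering (i j : Fin N) : (if i = j then ((N : ℝ) - 1) / (N : ℝ) else -(1 / (N : ℝ))) =
      (if i = j then 1 else 0) - (N : ℝ)⁻¹ := by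
    split_ifs <;> field_simp
    ring
  simp only [hcentering]
  rw [sum_comm]
  refine sum_congr rfl fun j _ => ?_
  simp only [sub_mul, ite_mul, one_mul, zero_mul, sum_sub_distrib, sum_ite_eq', mem_univ, if_true,
    mul_sum, sum_mul, mul_assoc]

variable [DecidableEq n]

/-- The matrix `F^{pⱼ}ₖ` of the paper: the column `F^{pⱼ}ₖ x` lists the coordinates, in the
eigenbasis `u`, of the derivative of the eigenvector `uₖ` when `pⱼ` moves with velocity `x`. -/
noncomputable def eigenvectorDerivCoeff (p : Fin N → n → ℝ) (lam : n → ℝ) (u : n → n → ℝ) (k : n)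
    (j : Fin N) : Matrix n n ℝ :=
  of fun m c => if m = k then 0 else ((N : ℝ) * (lam k - lam m))⁻¹ *
    (deviation p j ᵥ* (vecMulVec (u m) (u k) + vecMulVec (u k) (u m))) c

/-- The `(i, j)` block of the Hessian of the eigenvalue `λₖ`, in the form given by the paper. -/
noncomputable def eigenvalueHessianBlock (p : Fin N → n → ℝ) (lam : n → ℝ) (u : n → n → ℝ) (k : n)
    (i j : Fin N) : Matrix n n ℝ :=
  (2 / (N : ℝ)) •
    ((if i = j then ((N : ℝ) - 1) / (N : ℝ) else -(1 / (N : ℝ))) • vecMulVec (u k) (u k)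
      + vecMulVec (u k) (deviation p i) *
          ((of fun r c => u c r) * eigenvectorDerivCoeff p lam u k j)
      + (u k ⬝ᵥ deviation p i) • ((of fun r c => u c r) * eigenvectorDerivCoeff p lam u k j))

theorem eigenvectorDerivCoeff_mulVec (p : Fin N → n → ℝ) (lam : n → ℝ) (u : n → n → ℝ) (k : n)
    (j : Fin N) (x : n → ℝ) (m : n) :
    (eigenvectorDerivCoeff p lam u k j *ᵥ x) m =
      ((N : ℝ) * (lam k - lam m))⁻¹ * covarianceVariation p (u m) (u k) j x := by
  obtain rfl | hm := eq_or_ne m k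
  · simp [eigenvectorDerivCoeff, mulVec, dotProduct]
  · have hrow : eigenvectorDerivCoeff p lam u k j m = ((N : ℝ) * (lam k - lam m))⁻¹ •
        (deviation p j ᵥ* (vecMulVec (u m) (u k) + vecMulVec (u k) (u m))) :=
      funext fun c => if_neg hm
    simp only [mulVec, hrow, smul_dotProduct, vecMul_add, vecMul_vecMulVec, add_dotProduct,
      smul_eq_mul, covarianceVariation, dotProduct_comm (deviation p j)]

theorem dotProduct_eigenvalueHessianBlock_mulVec (p : Fin N → n → ℝ) (lam : n → ℝ)
    (u : n → n → ℝ) (k : n) (i j : Fin N) (y x : n → ℝ) :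
    y ⬝ᵥ (eigenvalueHessianBlock p lam u k i j *ᵥ x) = (2 / (N : ℝ)) *
      ((if i = j then ((N : ℝ) - 1) / (N : ℝ) else -(1 / (N : ℝ))) * ((u k ⬝ᵥ y) * (u k ⬝ᵥ x)) +
        ∑ m, ((N : ℝ) * (lam k - lam m))⁻¹ *
          (covarianceVariation p (u m) (u k) i y * covarianceVariation p (u m) (u k) j x)) := by
  simp only [eigenvalueHessianBlock, smul_mulVec, add_mulVec]
  rw [← mulVec_mulVec]
  simp only [vecMulVec_mulVec, op_smul_eq_smul, dotProduct_smul, dotProduct_add,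
    dotProduct_of_mul_mulVec, smul_eq_mul, eigenvectorDerivCoeff_mulVec]
  rw [dotProduct_comm y, mul_comm (u k ⬝ᵥ x), add_assoc, sum_mul, mul_sum, ← sum_add_distrib]
  congr 2
  refine sum_congr rfl fun m _ => ?_
  rw [covarianceVariation.eq_def p _ _ i y]
  ring

theorem sum_dotProduct_eigenvalueHessianBlock_mulVec (hN : N ≠ 0) (p : Fin N → n → ℝ) (lam : n → ℝ)
    (u : n → n → ℝ) (k : n) (δ ε : Fin N → n → ℝ) :
    ∑ i, ∑ j, δ i ⬝ᵥ (eigenvalueHessianBlock p lam u k i j *ᵥ ε j) =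
      u k ⬝ᵥ ((crossCovariance δ ε + crossCovariance ε δ) *ᵥ u k) +
        2 * ∑ m, (lam k - lam m)⁻¹ *
          ((u m ⬝ᵥ ((crossCovariance p δ + crossCovariance δ p) *ᵥ u k)) *
            (u m ⬝ᵥ ((crossCovariance p ε + crossCovariance ε p) *ᵥ u k))) := by
  have hcentered : u k ⬝ᵥ ((crossCovariance δ ε + crossCovariance ε δ) *ᵥ u k) =
      (2 / (N : ℝ)) * ∑ i, (u k ⬝ᵥ deviation δ i) * (u k ⬝ᵥ ε i) := by
    rw [add_mulVec, dotProduct_add, dotProduct_crossCovariance_mulVec_comm ε, ← two_mul,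
      dotProduct_crossCovariance_mulVec hN, ← mul_assoc, div_eq_mul_inv]
  have hcoupling : ∑ i, ∑ j, ∑ m, ((N : ℝ) * (lam k - lam m))⁻¹ *
        (covarianceVariation p (u m) (u k) i (δ i) * covarianceVariation p (u m) (u k) j (ε j)) =
      N * ∑ m, (lam k - lam m)⁻¹ *
        ((u m ⬝ᵥ ((crossCovariance p δ + crossCovariance δ p) *ᵥ u k)) *
          (u m ⬝ᵥ ((crossCovariance p ε + crossCovariance ε p) *ᵥ u k))) := by
    rw [sum_congr rfl fun i _ => sum_comm, sum_comm, mul_sum]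
    refine sum_congr rfl fun m _ => ?_
    simp only [← mul_sum, ← sum_mul, dotProduct_crossCovariance_add_mulVec hN, mul_inv]
    field_simp
  simp only [dotProduct_eigenvalueHessianBlock_mulVec, ← mul_sum, sum_add_distrib]
  rw [hcoupling, hcentered, sum_sum_centering_mul hN]
  simp only [dotProduct_deviation]
  field_simp

theorem exists_orthonormalBasis_toLp {u : n → n → ℝ}
    (horth : ∀ a b, u a ⬝ᵥ u b = if a = b then 1 else 0) :
    ∃ b : OrthonormalBasis n ℝ (EuclideanSpace ℝ n), ∀ m, b m = WithLp.toLp 2 (u m) := by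
  have hon : Orthonormal ℝ fun m => (WithLp.toLp 2 (u m) : EuclideanSpace ℝ n) :=
    orthonormal_iff_ite.mpr fun a b => (dotProduct_comm _ _).trans (horth a b)
  have hspan := hon.linearIndependent.span_eq_top_of_card_eq_finrank' finrank_euclideanSpace.symm
  exact ⟨OrthonormalBasis.mk hon hspan.ge, fun m => congrFun (OrthonormalBasis.coe_mk hon _) m⟩

theorem eigenvalue_second_derivative_general (hN : N ≠ 0) (p : Fin N → n → ℝ)
    (lam : n → ℝ) (u : n → n → ℝ) (horth : ∀ a b, u a ⬝ᵥ u b = if a = b then 1 else 0)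
    (heig : ∀ a, crossCovariance p p *ᵥ u a = lam a • u a) (k : n)
    (hsimple : ∀ m, m ≠ k → lam m ≠ lam k) :
    ∃ Λ : (Fin N → n → ℝ) → ℝ,
      Λ p = lam k ∧
      (∀ᶠ q in 𝓝 p, ∃ v : n → ℝ, v ≠ 0 ∧ crossCovariance q q *ᵥ v = Λ q • v) ∧
      ContDiffAt ℝ 2 Λ p ∧
      ∀ δ ε : Fin N → n → ℝ, iteratedFDeriv ℝ 2 Λ p ![δ, ε] =
        ∑ i, ∑ j, δ i ⬝ᵥ (eigenvalueHessianBlock p lam u k i j *ᵥ ε j) := by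
  obtain ⟨b, hbu⟩ := exists_orthonormalBasis_toLp horth
  have hT : ContDiffAt ℝ 2 covarianceOperator p := contDiff_covarianceOperator.contDiffAt
  have hsymm := isSymmetric_covarianceOperator p
  have hb (m : n) : covarianceOperator p (b m) = lam m • b m := by
    rw [hbu, covarianceOperator_toLp, heig, WithLp.toLp_smul]
  obtain ⟨Λ, w, hΛ, hw, hbranch⟩ := IsEigenbranchAt.exists_of_simple hT hsymm (hb k)
    (b.inner_eq_one k) fun x => eq_zero_of_simple_eigenvalue hsymm b hb hsimple
  refine ⟨Λ, hΛ, ?_, hbranch.contDiffAt_eigenvalue, fun δ ε => ?_⟩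
  · filter_upwards [hbranch.eventually_apply_eq, hbranch.eventually_inner_eq_one] with q heq hone
    refine ⟨(w q).ofLp, fun h0 => ?_, congrArg WithLp.ofLp heq⟩
    rw [(WithLp.ofLp_eq_zero 2).mp h0, inner_zero_right] at hone
    exact zero_ne_one hone
  · rw [iteratedFDeriv_two_apply, sum_dotProduct_eigenvalueHessianBlock_mulVec hN]
    refine (hbranch.fderiv_fderiv_eigenvalue_eq_sum hT (.of_forall isSymmetric_covarianceOperator)
      b hb hw hΛ hsimple δ ε).trans ?_
    simp only [hbu, fderiv_covarianceOperator_apply, fderiv_fderiv_covarianceOperator_apply,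
      inner_toLp_toEuclideanCLM_toLp]

end Hessian

/-- Theorem 2 of the paper: with pairwise distinct eigenvalues
`λ₁ > λ₂ > λ₃` of `A` (orthonormal eigenvectors `u₁, u₂, u₃`, eigenvector
matrix `U = [u₁ u₂ u₃]`), and with `F^{pⱼ}_{m,n} = ((pⱼ - p̄)ᵀ/(N(λₙ - λₘ)))
(uₘuₙᵀ + uₙuₘᵀ)` for `m ≠ n`, `0` for `m = n`, and `F^{pⱼ}ₖ` the 3×3 matrix
with `m`-th row `F^{pⱼ}_{m,k}`, the eigenvalue function `λₖ` of the points
(a local eigenvalue selection `Λ` with `Λ p = λₖ`) is twice differentiable at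
the configuration, and the `(i,j)` block of its Hessian equals
`(2/N)(((N-1)/N)·uₖuₖᵀ + uₖ(pᵢ-p̄)ᵀ U F^{pⱼ}ₖ + U F^{pⱼ}ₖ·(uₖᵀ(pᵢ-p̄)))` when
`i = j`, and
`(2/N)(-(1/N)·uₖuₖᵀ + uₖ(pᵢ-p̄)ᵀ U F^{pⱼ}ₖ + U F^{pⱼ}ₖ·(uₖᵀ(pᵢ-p̄)))` when
`i ≠ j`. -/
theorem eigenvalue_second_derivative
    (N : ℕ) (hN : 1 ≤ N) (p : Fin N → Fin 3 → ℝ)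
    (pbar : Fin 3 → ℝ) (hpbar : pbar = (N : ℝ)⁻¹ • ∑ i, p i)
    (lam : Fin 3 → ℝ) (u : Fin 3 → Fin 3 → ℝ)
    (horth : ∀ a b : Fin 3, u a ⬝ᵥ u b = if a = b then 1 else 0)
    (heig : ∀ a : Fin 3, covMatrix N p *ᵥ u a = lam a • u a)
    (hord : ∀ a b : Fin 3, a < b → lam b < lam a)
    (k : Fin 3)
    (U : Matrix (Fin 3) (Fin 3) ℝ) (hU : U = Matrix.of fun r c => u c r)
    (F : Fin N → Matrix (Fin 3) (Fin 3) ℝ)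
    (hF : ∀ j : Fin N, F j = Matrix.of fun m c =>
      if m = k then 0
      else ((N : ℝ) * (lam k - lam m))⁻¹ *
        (((p j - pbar) ᵥ* (vecMulVec (u m) (u k) + vecMulVec (u k) (u m))) c))
    (H : Fin N → Fin N → Matrix (Fin 3) (Fin 3) ℝ)
    (hH : ∀ i j : Fin N, H i j = (2 / (N : ℝ)) •
      ((if i = j then ((N : ℝ) - 1) / (N : ℝ) else -(1 / (N : ℝ))) •
          vecMulVec (u k) (u k)
        + vecMulVec (u k) (p i - pbar) * (U * F j)
        + (u k ⬝ᵥ (p i - pbar)) • (U * F j))) :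
    ∃ Λ : (Fin N → Fin 3 → ℝ) → ℝ,
      Λ p = lam k ∧
      (∀ᶠ q in nhds p, ∃ v : Fin 3 → ℝ, v ≠ 0 ∧ covMatrix N q *ᵥ v = Λ q • v) ∧
      ContDiffAt ℝ 2 Λ p ∧
      ∀ δ ε : Fin N → Fin 3 → ℝ,
        iteratedFDeriv ℝ 2 Λ p ![δ, ε] = ∑ i, ∑ j, δ i ⬝ᵥ (H i j *ᵥ ε j) := by
  subst hpbar hU
  obtain rfl := funext hF
  obtain rfl := funext₂ hH
  have hsimple (m : Fin 3) (hm : m ≠ k) : lam m ≠ lam k :=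
    hm.lt_or_gt.elim (fun h => (hord m k h).ne') fun h => (hord k m h).ne
  exact eigenvalue_second_derivative_general (Nat.ne_of_gt hN) p lam u horth heig k hsimple
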